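/- Let 𝓓 = (Ω, 𝓑) be a β(i) design with parameter (v, k, d). If k−d ≥ i+1, then S₂ is not empty, i.e. there exists a (d+2(i+1))-element subset X of Ω with |X ∩ B| ≤ d+i+1 for every block B ∈ 𝓑. -/

import Mathlib

open Finset

variable {α : Type*} [Fintype α] [DecidableEq α]

/-- `𝓑` is a design on the finite type `α` of cardinality `v`, with block size `k` and
maximal pairwise block intersection size `d`. -/
def IsDesign (𝓑 : Finset (Finset α)) (v k d : ℕ) : Prop :=
  Fintype.card α = v ∧ 2 ≤ 𝓑.card ∧ d < k ∧ k < v ∧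
  (∀ B ∈ 𝓑, B.card = k) ∧
  (∀ B ∈ 𝓑, ∀ C ∈ 𝓑, B ≠ C → (B ∩ C).card ≤ d) ∧
  (∃ B ∈ 𝓑, ∃ C ∈ 𝓑, B ≠ C ∧ (B ∩ C).card = d)

/-- `𝓑` is a `β(i)` design with parameters `(v, k, d)`: a design such that
`1 ≤ i ≤ (v - d + 1)/2` and every `(d + 2i - 1)`-element subset `X` of `Ω` admits a
unique block `B` with `|X ∩ B| ≥ d + i`. -/
def IsBetaDesign (𝓑 : Finset (Finset α)) (v k d i : ℕ) : Prop :=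
  IsDesign 𝓑 v k d ∧ 1 ≤ i ∧ 2 * i ≤ v - d + 1 ∧
  ∀ X : Finset α, X.card = d + 2 * i - 1 →
    ∃! B, B ∈ 𝓑 ∧ d + i ≤ (X ∩ B).card

section

variable {Ω : Type*} [DecidableEq Ω] {B C P Q : Finset Ω}

theorem union_inter_eq_left_of_subset_of_disjoint (hPB : P ⊆ B) (hQB : Disjoint Q B) :
    (P ∪ Q) ∩ B = P := by
  rw [union_inter_distrib_right, inter_eq_left.mpr hPB, disjoint_iff_inter_eq_empty.mp hQB,
    union_empty]

theorem card_union_inter_le_card_inter_add (hPB : P ⊆ B) (Q E : Finset Ω) :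
    #((P ∪ Q) ∩ E) ≤ #(B ∩ E) + #Q := by
  rw [union_inter_distrib_right]
  calc
    #(P ∩ E ∪ Q ∩ E) ≤ #(B ∩ E ∪ Q) :=
      card_le_card (union_subset_union (inter_subset_inter_right hPB) inter_subset_left)
    _ ≤ #(B ∩ E) + #Q := card_union_le _ _

/-- The set `X` consists of `d + j` points of `B` and `j` points of `C \ B`: it meets `B` only in
the former, and any other block in at most `d` of the former and `j` of the latter. -/
theorem S2_nonempty_general {𝓑 : Set (Finset Ω)} {d j : ℕ}
    (h_inter : 𝓑.Pairwise fun B C ↦ #(B ∩ C) ≤ d) (hB : B ∈ 𝓑) (hC : C ∈ 𝓑)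
    (hBC : B ≠ C) (hjB : d + j ≤ #B) (hjC : d + j ≤ #C) :
    ∃ X : Finset Ω, #X = d + 2 * j ∧ ∀ E ∈ 𝓑, #(X ∩ E) ≤ d + j := by
  have hCB : j ≤ #(C \ B) := by
    have hd : #(B ∩ C) ≤ d := h_inter hB hC hBC
    rw [card_sdiff]
    omega
  obtain ⟨P, hPB, hP⟩ := exists_subset_card_eq hjB
  obtain ⟨Q, hQC, hQ⟩ := exists_subset_card_eq hCB
  have hQB : Disjoint Q B := disjoint_of_subset_left hQC sdiff_disjoint
  have hPQ : Disjoint P Q := disjoint_of_subset_left hPB hQB.symm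
  refine ⟨P ∪ Q, ?_, fun E hE ↦ ?_⟩
  · rw [card_union_of_disjoint hPQ, hP, hQ]
    ring
  · obtain rfl | hBE := eq_or_ne B E
    · rw [union_inter_eq_left_of_subset_of_disjoint hPB hQB, hP]
    · calc
        #((P ∪ Q) ∩ E) ≤ #(B ∩ E) + #Q := card_union_inter_le_card_inter_add hPB Q E
        _ ≤ d + j := add_le_add (h_inter hB hE hBE) hQ.le

end

/-- **Lemma 2.1 (2).** If `𝓑` is a `β(i)` design with parameter `(v, k, d)` and
`k - d ≥ i + 1`, then `S₂` is nonempty: there is a `(d + 2(i+1))`-element subset `X` of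
`Ω` with `|X ∩ B| ≤ d + i + 1` for every block `B ∈ 𝓑`. -/
theorem S2_nonempty (𝓑 : Finset (Finset α)) (v k d i : ℕ)
    (hB : IsBetaDesign 𝓑 v k d i) (hkd : i + 1 ≤ k - d) :
    ∃ X : Finset α, X.card = d + 2 * (i + 1) ∧ ∀ B ∈ 𝓑, (X ∩ B).card ≤ d + i + 1 := by
  obtain ⟨⟨-, -, -, -, hk, hd, B, hB_mem, C, hC_mem, hBC, -⟩, -⟩ := hB
  exact S2_nonempty_general (𝓑 := 𝓑) (j := i + 1) (fun D hD E hE ↦ hd D hD E hE)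
    hB_mem hC_mem hBC (by rw [hk B hB_mem]; omega) (by rw [hk C hC_mem]; omega)
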